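/- The map Ψ : ℬ → BZ^e, a ↦ M(a) = (M_K(a))_{K∈M_n^×}, is a bijection from the set of Lusztig data onto the set of e-BZ data. -/

import Mathlib

/-- The set of Lusztig data: `a : Π → ℤ_{≥0}`, modeled as an integer-valued function on
`ℤ × ℤ` that is nonnegative everywhere and vanishes off `Π = {(k,l) : 1 ≤ k < l ≤ n+1}`. -/
def IsLusztig (n : ℕ) (a : ℤ → ℤ → ℤ) : Prop :=
  (∀ k l : ℤ, 0 ≤ a k l) ∧ ∀ k l : ℤ, ¬(1 ≤ k ∧ k < l ∧ l ≤ (n : ℤ) + 1) → a k l = 0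

/-- The `p`-th smallest element (1-indexed) `k_p` of a Maya diagram `K`. -/
def kth (K : Finset ℕ) (p : ℕ) : ℕ := (K.sort (· ≤ ·)).getD (p - 1) 0

/-- `C = (c_{p,q})_{1 ≤ p ≤ q ≤ l}` (with `l = |K|`) is a `K`-tableau: an upper-triangular
integer matrix with `c_{p,p} = k_p`, `c_{p,q} ≤ c_{p,q+1}` and `c_{p,q} < c_{p+1,q}`. -/
def IsKTab (K : Finset ℕ) (c : ℕ → ℕ → ℤ) : Prop :=
  (∀ p : ℕ, 1 ≤ p → p ≤ K.card → c p p = (kth K p : ℤ)) ∧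
  (∀ p q : ℕ, 1 ≤ p → p ≤ q → q + 1 ≤ K.card → c p q ≤ c p (q + 1)) ∧
  (∀ p q : ℕ, 1 ≤ p → p + 1 ≤ q → q ≤ K.card → c p q < c (p + 1) q)

/-- `Σ_{1 ≤ p < q ≤ l} a_{c_{p,q}, c_{p,q}+(q−p)}`. -/
def tabSum (a : ℤ → ℤ → ℤ) (K : Finset ℕ) (c : ℕ → ℕ → ℤ) : ℤ :=
  ∑ p ∈ Finset.Icc 1 K.card, ∑ q ∈ Finset.Icc (p + 1) K.card,
    a (c p q) (c p q + ((q : ℤ) - (p : ℤ)))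

/-- `M_K(a) = −Σ_{j=1}^{l} Σ_{i=1}^{k_j−1} a_{i,k_j} + min{ tabSum over K-tableaux }`,
for `K ∈ M_n^×`, with the conventions `M_∅(a) = M_{[1,n+1]}(a) = 0`. -/
noncomputable def MK (n : ℕ) (a : ℤ → ℤ → ℤ) (K : Finset ℕ) : ℤ :=
  if K = ∅ ∨ K = Finset.Icc 1 (n + 1) then 0
  else
    -(∑ k ∈ K, ∑ s ∈ Finset.Icc 1 (k - 1), a (s : ℤ) (k : ℤ)) +
      sInf {z : ℤ | ∃ c : ℕ → ℕ → ℤ, IsKTab K c ∧ z = tabSum a K c}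
/-- A BZ datum of type `A_n`: a collection of integers `M = (M_K)` indexed by Maya diagrams
`K ⊆ [1,n+1]` (modeled as a total function on `Finset ℕ`, with the conventions
`M_∅ = M_{[1,n+1]} = 0`), satisfying the inequalities (BZ-1)' and the 3-term relations
(BZ-2)'. -/
def IsBZ (n : ℕ) (M : Finset ℕ → ℤ) : Prop :=
  M ∅ = 0 ∧ M (Finset.Icc 1 (n + 1)) = 0 ∧
  (∀ i j : ℕ, ∀ K : Finset ℕ, 1 ≤ i → i ≤ n + 1 → 1 ≤ j → j ≤ n + 1 → i ≠ j →
    K ⊆ Finset.Icc 1 (n + 1) → i ∉ K → j ∉ K →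
    M (insert i K) + M (insert j K) ≤ M (insert i (insert j K)) + M K) ∧
  (∀ i j k : ℕ, ∀ K : Finset ℕ, 1 ≤ i → i < j → j < k → k ≤ n + 1 →
    K ⊆ Finset.Icc 1 (n + 1) → i ∉ K → j ∉ K → k ∉ K →
    M (insert i (insert k K)) + M (insert j K) =
      min (M (insert i (insert j K)) + M (insert k K))
        (M (insert j (insert k K)) + M (insert i K)))

/-- A `w₀`-BZ datum: a BZ datum with `M_{[n−i+2,n+1]} = 0` for all `1 ≤ i ≤ n`. -/
def IsW0BZ (n : ℕ) (M : Finset ℕ → ℤ) : Prop :=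
  IsBZ n M ∧ ∀ i : ℕ, 1 ≤ i → i ≤ n → M (Finset.Icc (n - i + 2) (n + 1)) = 0

/-- An `e`-BZ datum: a BZ datum with `M_{[1,i]} = 0` for all `1 ≤ i ≤ n`. -/
def IsEBZ (n : ℕ) (M : Finset ℕ → ℤ) : Prop :=
  IsBZ n M ∧ ∀ i : ℕ, 1 ≤ i → i ≤ n → M (Finset.Icc 1 i) = 0



def GBZ (F : Finset ℕ → ℤ) : Prop :=
  (∀ (i j : ℕ) (K : Finset ℕ), i ≠ j → i ∉ K → j ∉ K →
    F (insert i K) + F (insert j K) ≤ F (insert i (insert j K)) + F K) ∧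
  (∀ (i j k : ℕ) (K : Finset ℕ), i < j → j < k → i ∉ K → j ∉ K → k ∉ K →
    F (insert i (insert k K)) + F (insert j K) =
      min (F (insert i (insert j K)) + F (insert k K))
        (F (insert j (insert k K)) + F (insert i K)))

def stp (s : ℕ) (F : Finset ℕ → ℤ) (K : Finset ℕ) : ℤ :=
  if s ∈ K ∧ s + 1 ∉ K then min (F K) (F (insert (s+1) (K.erase s))) else F K

lemma stp_a (s : ℕ) (F : Finset ℕ → ℤ) (K : Finset ℕ) (h1 : s ∉ K) (h2 : s + 1 ∉ K) :
    stp s F (insert s K) = min (F (insert s K)) (F (insert (s+1) K)) := by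
  have h3 : s ∈ insert s K ∧ s + 1 ∉ insert s K := by simp [h2]
  rw [stp, if_pos h3, Finset.erase_insert h1]

lemma stp_b (s : ℕ) (F : Finset ℕ → ℤ) (K : Finset ℕ) (h1 : s ∉ K) :
    stp s F K = F K := by
  rw [stp, if_neg (by tauto)]

lemma stp_c (s : ℕ) (F : Finset ℕ → ℤ) (K : Finset ℕ) (h1 : s + 1 ∈ K) :
    stp s F K = F K := by
  rw [stp, if_neg (by tauto)]

lemma pl3 {F : Finset ℕ → ℤ} (h : GBZ F) (i j k l : ℕ) (K : Finset ℕ) (h1 : i < j) (h2 : j < k)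
    (h3 : k < l) (hi : i ∉ K) (hj : j ∉ K) (hk : k ∉ K) (hl : l ∉ K) :
    F (insert i (insert k K)) + F (insert j (insert l K)) =
      min (F (insert i (insert j K)) + F (insert k (insert l K)))
        (F (insert i (insert l K)) + F (insert j (insert k K))) := by
  have t1 := h.2 i j k K h1 h2 hi hj hk
  have t2 := h.2 j k l K h2 h3 hj hk hl
  have t3 := h.2 i k l K (h1.trans h2) h3 hi hk hl
  omega

lemma minc (x y z : ℤ) (h : x = min y z) : x ≤ y ∧ x ≤ z ∧ (x = y ∨ x = z) := by omega

lemma crossA (sik rj rik sj sij rk rij sk sjk ri rjk si srj ij jk sr : ℤ)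
  (t1 : sik + sj = min (sij + sk) (sjk + si))
  (t2 : rik + rj = min (rij + rk) (rjk + ri))
  (t3 : sij + rj = min (srj + ij) (rij + sj))
  (t4 : sjk + rj = min (srj + jk) (rjk + sj))
  (p1 : sj + rk = min (sr + jk) (sk + rj))
  (p2 : si + rj = min (sr + ij) (sj + ri)) :
  min (sik + rj) (rik + sj) = min (min (sij + rk) (rij + sk)) (min (sjk + ri) (rjk + si)) := by
  obtain ⟨a1, b1, t1⟩ := minc _ _ _ t1
  obtain ⟨a2, b2, t2⟩ := minc _ _ _ t2
  obtain ⟨a3, b3, t3⟩ := minc _ _ _ t3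
  obtain ⟨a4, b4, t4⟩ := minc _ _ _ t4
  obtain ⟨a5, b5, t5⟩ := minc _ _ _ p1
  obtain ⟨a6, b6, t6⟩ := minc _ _ _ p2
  apply le_antisymm
  · rw [le_min_iff, le_min_iff, le_min_iff]
    simp only [min_le_iff]
    refine ⟨⟨?_, ?_⟩, ?_, ?_⟩
    · by_contra! hc
      rcases t3 with t3 | t3 <;> rcases t4 with t4 | t4 <;> rcases t5 with t5 | t5 <;> rcases t6 with t6 | t6 <;> linarith
    · by_contra! hc
      rcases t3 with t3 | t3 <;> rcases t4 with t4 | t4 <;> rcases t5 with t5 | t5 <;> rcases t6 with t6 | t6 <;> linarith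
    · by_contra! hc
      rcases t3 with t3 | t3 <;> rcases t4 with t4 | t4 <;> rcases t5 with t5 | t5 <;> rcases t6 with t6 | t6 <;> linarith
    · by_contra! hc
      rcases t3 with t3 | t3 <;> rcases t4 with t4 | t4 <;> rcases t5 with t5 | t5 <;> rcases t6 with t6 | t6 <;> linarith
  · rw [le_min_iff]
    simp only [min_le_iff]
    constructor
    · by_contra! hc
      obtain ⟨⟨c1, c2⟩, c3, c4⟩ := hc
      rcases t1 with t1 | t1 <;> rcases t3 with t3 | t3 <;> rcases t4 with t4 | t4 <;> rcases t5 with t5 | t5 <;> rcases t6 with t6 | t6 <;> linarith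
    · by_contra! hc
      obtain ⟨⟨c1, c2⟩, c3, c4⟩ := hc
      rcases t2 with t2 | t2 <;> rcases t3 with t3 | t3 <;> rcases t4 with t4 | t4 <;> rcases t5 with t5 | t5 <;> rcases t6 with t6 | t6 <;> linarith

lemma crossB (sik rj rik sj sij rk rij sk sjk ri rjk si srj ij jk sr : ℤ)
  (t1 : sik + sj = min (sij + sk) (sjk + si))
  (t2 : rik + rj = min (rij + rk) (rjk + ri))
  (t3 : rij + sj = min (sij + rj) (srj + ij))
  (t4 : sjk + rj = min (srj + jk) (rjk + sj))
  (p1 : sj + rk = min (sr + jk) (sk + rj))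
  (p2 : ri + sj = min (si + rj) (ij + sr)) :
  min (sik + rj) (rik + sj) = min (min (sij + rk) (rij + sk)) (min (sjk + ri) (rjk + si)) := by
  obtain ⟨a1, b1, t1⟩ := minc _ _ _ t1
  obtain ⟨a2, b2, t2⟩ := minc _ _ _ t2
  obtain ⟨a3, b3, t3⟩ := minc _ _ _ t3
  obtain ⟨a4, b4, t4⟩ := minc _ _ _ t4
  obtain ⟨a5, b5, t5⟩ := minc _ _ _ p1
  obtain ⟨a6, b6, t6⟩ := minc _ _ _ p2
  apply le_antisymm
  · rw [le_min_iff, le_min_iff, le_min_iff]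
    simp only [min_le_iff]
    refine ⟨⟨?_, ?_⟩, ?_, ?_⟩
    · by_contra! hc
      rcases t3 with t3 | t3 <;> rcases t4 with t4 | t4 <;> rcases t5 with t5 | t5 <;> rcases t6 with t6 | t6 <;> linarith
    · by_contra! hc
      rcases t3 with t3 | t3 <;> rcases t4 with t4 | t4 <;> rcases t5 with t5 | t5 <;> rcases t6 with t6 | t6 <;> linarith
    · by_contra! hc
      rcases t3 with t3 | t3 <;> rcases t4 with t4 | t4 <;> rcases t5 with t5 | t5 <;> rcases t6 with t6 | t6 <;> linarith
    · by_contra! hc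
      rcases t3 with t3 | t3 <;> rcases t4 with t4 | t4 <;> rcases t5 with t5 | t5 <;> rcases t6 with t6 | t6 <;> linarith
  · rw [le_min_iff]
    simp only [min_le_iff]
    constructor
    · by_contra! hc
      obtain ⟨⟨c1, c2⟩, c3, c4⟩ := hc
      rcases t1 with t1 | t1 <;> rcases t3 with t3 | t3 <;> rcases t4 with t4 | t4 <;> rcases t5 with t5 | t5 <;> rcases t6 with t6 | t6 <;> linarith
    · by_contra! hc
      obtain ⟨⟨c1, c2⟩, c3, c4⟩ := hc
      rcases t2 with t2 | t2 <;> rcases t3 with t3 | t3 <;> rcases t4 with t4 | t4 <;> rcases t5 with t5 | t5 <;> rcases t6 with t6 | t6 <;> linarith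

lemma crossC (sik rj rik sj sij rk rij sk sjk ri rjk si srj ij jk sr : ℤ)
  (t1 : sik + sj = min (sij + sk) (sjk + si))
  (t2 : rik + rj = min (rij + rk) (rjk + ri))
  (t3 : rij + sj = min (sij + rj) (srj + ij))
  (t4 : sjk + rj = min (srj + jk) (rjk + sj))
  (p1 : sk + rj = min (sj + rk) (jk + sr))
  (p2 : si + rj = min (sr + ij) (sj + ri)) :
  min (sik + rj) (rik + sj) = min (min (sij + rk) (rij + sk)) (min (sjk + ri) (rjk + si)) := by
  obtain ⟨a1, b1, t1⟩ := minc _ _ _ t1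
  obtain ⟨a2, b2, t2⟩ := minc _ _ _ t2
  obtain ⟨a3, b3, t3⟩ := minc _ _ _ t3
  obtain ⟨a4, b4, t4⟩ := minc _ _ _ t4
  obtain ⟨a5, b5, t5⟩ := minc _ _ _ p1
  obtain ⟨a6, b6, t6⟩ := minc _ _ _ p2
  apply le_antisymm
  · rw [le_min_iff, le_min_iff, le_min_iff]
    simp only [min_le_iff]
    refine ⟨⟨?_, ?_⟩, ?_, ?_⟩
    · by_contra! hc
      rcases t3 with t3 | t3 <;> rcases t4 with t4 | t4 <;> rcases t5 with t5 | t5 <;> rcases t6 with t6 | t6 <;> linarith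
    · by_contra! hc
      rcases t3 with t3 | t3 <;> rcases t4 with t4 | t4 <;> rcases t5 with t5 | t5 <;> rcases t6 with t6 | t6 <;> linarith
    · by_contra! hc
      rcases t3 with t3 | t3 <;> rcases t4 with t4 | t4 <;> rcases t5 with t5 | t5 <;> rcases t6 with t6 | t6 <;> linarith
    · by_contra! hc
      rcases t3 with t3 | t3 <;> rcases t4 with t4 | t4 <;> rcases t5 with t5 | t5 <;> rcases t6 with t6 | t6 <;> linarith
  · rw [le_min_iff]
    simp only [min_le_iff]
    constructor
    · by_contra! hc
      obtain ⟨⟨c1, c2⟩, c3, c4⟩ := hc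
      rcases t1 with t1 | t1 <;> rcases t3 with t3 | t3 <;> rcases t4 with t4 | t4 <;> rcases t5 with t5 | t5 <;> rcases t6 with t6 | t6 <;> linarith
    · by_contra! hc
      obtain ⟨⟨c1, c2⟩, c3, c4⟩ := hc
      rcases t2 with t2 | t2 <;> rcases t3 with t3 | t3 <;> rcases t4 with t4 | t4 <;> rcases t5 with t5 | t5 <;> rcases t6 with t6 | t6 <;> linarith

lemma crossD (sik rj rik sj sij rk rij sk sjk ri rjk si srj ij jk sr : ℤ)
  (t1 : sik + sj = min (sij + sk) (sjk + si))
  (t2 : rik + rj = min (rij + rk) (rjk + ri))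
  (t3 : rij + sj = min (sij + rj) (srj + ij))
  (t4 : rjk + sj = min (sjk + rj) (srj + jk))
  (p1 : sj + rk = min (sr + jk) (sk + rj))
  (p2 : si + rj = min (sr + ij) (sj + ri)) :
  min (sik + rj) (rik + sj) = min (min (sij + rk) (rij + sk)) (min (sjk + ri) (rjk + si)) := by
  obtain ⟨a1, b1, t1⟩ := minc _ _ _ t1
  obtain ⟨a2, b2, t2⟩ := minc _ _ _ t2
  obtain ⟨a3, b3, t3⟩ := minc _ _ _ t3
  obtain ⟨a4, b4, t4⟩ := minc _ _ _ t4
  obtain ⟨a5, b5, t5⟩ := minc _ _ _ p1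
  obtain ⟨a6, b6, t6⟩ := minc _ _ _ p2
  apply le_antisymm
  · rw [le_min_iff, le_min_iff, le_min_iff]
    simp only [min_le_iff]
    refine ⟨⟨?_, ?_⟩, ?_, ?_⟩
    · by_contra! hc
      rcases t3 with t3 | t3 <;> rcases t4 with t4 | t4 <;> rcases t5 with t5 | t5 <;> rcases t6 with t6 | t6 <;> linarith
    · by_contra! hc
      rcases t3 with t3 | t3 <;> rcases t4 with t4 | t4 <;> rcases t5 with t5 | t5 <;> rcases t6 with t6 | t6 <;> linarith
    · by_contra! hc
      rcases t3 with t3 | t3 <;> rcases t4 with t4 | t4 <;> rcases t5 with t5 | t5 <;> rcases t6 with t6 | t6 <;> linarith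
    · by_contra! hc
      rcases t3 with t3 | t3 <;> rcases t4 with t4 | t4 <;> rcases t5 with t5 | t5 <;> rcases t6 with t6 | t6 <;> linarith
  · rw [le_min_iff]
    simp only [min_le_iff]
    constructor
    · by_contra! hc
      obtain ⟨⟨c1, c2⟩, c3, c4⟩ := hc
      rcases t1 with t1 | t1 <;> rcases t3 with t3 | t3 <;> rcases t4 with t4 | t4 <;> rcases t5 with t5 | t5 <;> rcases t6 with t6 | t6 <;> linarith
    · by_contra! hc
      obtain ⟨⟨c1, c2⟩, c3, c4⟩ := hc
      rcases t2 with t2 | t2 <;> rcases t3 with t3 | t3 <;> rcases t4 with t4 | t4 <;> rcases t5 with t5 | t5 <;> rcases t6 with t6 | t6 <;> linarith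

lemma tri {F : Finset ℕ → ℤ} (h : GBZ F) (x y z : ℕ) (K : Finset ℕ) (h1 : x ≠ y) (h2 : y ≠ z)
    (h3 : x ≠ z) (hx : x ∉ K) (hy : y ∉ K) (hz : z ∉ K) :
    F (insert x (insert z K)) + F (insert y K) ≤ F (insert x (insert y K)) + F (insert z K) ∨
    F (insert y (insert z K)) + F (insert x K) ≤ F (insert x (insert y K)) + F (insert z K) := by
  have c1 := congrArg F (Finset.insert_comm x y K)
  have c2 := congrArg F (Finset.insert_comm x z K)
  have c3 := congrArg F (Finset.insert_comm y z K)
  rcases lt_or_gt_of_ne h1 with h1 | h1 <;> rcases lt_or_gt_of_ne h2 with h2 | h2 <;>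
    rcases lt_or_gt_of_ne h3 with h3 | h3 <;> try omega
  · have := h.2 x y z K h1 h2 hx hy hz; omega
  · have := h.2 x z y K h3 h2 hx hz hy; omega
  · have := h.2 z x y K h3 h1 hz hx hy; omega
  · have := h.2 y x z K h1 h3 hy hx hz; omega
  · have := h.2 y z x K h2 h3 hy hz hx; omega
  · have := h.2 z y x K h2 h1 hz hy hx; omega

lemma bz1_arith (s r si ri sj rj sij rij sr sri srj : ℤ)
   (d1 : si + sj ≤ sij + s) (d2 : ri + rj ≤ rij + r)
   (t1 : sri + sj ≤ sij + sr ∨ srj + si ≤ sij + sr)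
   (t2 : sri + rj ≤ rij + sr ∨ srj + ri ≤ rij + sr)
   (e1 : sr + si ≤ sri + s) (e2 : sr + sj ≤ srj + s)
   (e3 : sr + ri ≤ sri + r) (e4 : sr + rj ≤ srj + r) :
   min si ri + min sj rj ≤ min sij rij + min s r := by
  omega

lemma gbz_stp1 {F : Finset ℕ → ℤ} (h : GBZ F) (s i j : ℕ) (K : Finset ℕ) (hij : i ≠ j)
    (hi : i ∉ K) (hj : j ∉ K) :
    stp s F (insert i K) + stp s F (insert j K) ≤ stp s F (insert i (insert j K)) + stp s F K := by
  by_cases hsK : s ∈ K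
  · obtain ⟨L, hL, rfl⟩ : ∃ L, s ∉ L ∧ insert s L = K :=
      ⟨K.erase s, by simp, Finset.insert_erase hsK⟩
    simp only [Finset.mem_insert, not_or] at hi hj
    by_cases hrL : s + 1 ∈ L
    · rw [stp_c, stp_c, stp_c, stp_c]
      · exact h.1 i j _ hij (by simp [hi]) (by simp [hj])
      all_goals simp [hrL]
    · by_cases hri : s + 1 = i
      · subst hri
        rw [stp_c s F (insert (s+1) _) (by simp), stp_c s F (insert (s+1) _) (by simp),
          Finset.insert_comm j s, stp_a, stp_a]
        · have a1 := h.1 (s+1) j (insert s L) hij (by simp [hi]) (by simp [hj])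
          have a2 := h.1 s j (insert (s+1) L) (by omega) (by simp [hL]) (by simp [hj, hij.symm])
          simp only [Finset.insert_comm] at a1 a2 ⊢
          omega
        all_goals simp [*]
        all_goals omega
      · by_cases hrj : s + 1 = j
        · subst hrj
          rw [stp_c s F (insert (s+1) _) (by simp), stp_c s F (insert i (insert (s+1) _)) (by simp),
            Finset.insert_comm i s, stp_a, stp_a]
          · have a1 := h.1 (s+1) i (insert s L) (by omega) (by simp [hrL]) (by simp [hi])
            have a2 := h.1 s i (insert (s+1) L) (by omega) (by simp [hL]) (by simp [hi, hij])
            simp only [Finset.insert_comm] at a1 a2 ⊢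
            omega
          all_goals simp [*]
          all_goals omega
        · have hrs : s + 1 ≠ s := by omega
          rw [Finset.insert_comm j s, Finset.insert_comm i s, Finset.insert_comm i s,
            stp_a, stp_a, stp_a, stp_a]
          · have ni : ¬ i = s + 1 := fun h => hri h.symm
            have nj : ¬ j = s + 1 := fun h => hrj h.symm
            have d1 := h.1 i j (insert s L) hij (by simp [hi]) (by simp [hj])
            have d2 := h.1 i j (insert (s+1) L) hij (by simp [hi, ni]) (by simp [hj, nj])
            have e1 := h.1 (s+1) i (insert s L) hri (by simp [hrL]) (by simp [hi])
            have e2 := h.1 (s+1) j (insert s L) hrj (by simp [hrL]) (by simp [hj])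
            have e3 := h.1 s i (insert (s+1) L) (by tauto) (by simp [hL]) (by simp [hi, ni])
            have e4 := h.1 s j (insert (s+1) L) (by tauto) (by simp [hL]) (by simp [hj, nj])
            have t1 := tri h i j (s+1) (insert s L) hij nj ni (by simp [hi]) (by simp [hj]) (by simp [hrL])
            have t2 := tri h i j s (insert (s+1) L) hij (by tauto) (by tauto) (by simp [hi, ni]) (by simp [hj, nj]) (by simp [hL])
            simp only [Finset.insert_comm] at d1 d2 e1 e2 e3 e4 t1 t2 ⊢
            apply bz1_arith <;> first | assumption | omega
          all_goals simp [*]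
          all_goals tauto
  · by_cases hsi : s = i
    · subst hsi
      rw [stp_b s F K hsK, stp_b s F (insert j K) (by simp [hsK, hij])]
      by_cases hrK : s + 1 ∈ K
      · rw [stp_c, stp_c]
        · exact h.1 s j _ hij hi hj
        all_goals simp [hrK]
      · by_cases hrj : s + 1 = j
        · subst hrj
          rw [stp_a s F K hsK hrK, stp_c s F _ (by simp)]
          have := h.1 s (s+1) K hij hi hj
          omega
        · rw [stp_a s F K hsK hrK, stp_a s F _ (by simp [hsK, hij]) (by simp [hrK, hrj])]
          have a1 := h.1 s j K hij hi hj
          have a2 := h.1 (s+1) j K hrj hrK hj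
          omega
    · by_cases hsj : s = j
      · subst hsj
        rw [stp_b s F K hsK, stp_b s F (insert i K) (by simp [hsK, hij.symm]), Finset.insert_comm i s]
        by_cases hrK : s + 1 ∈ K
        · rw [stp_c, stp_c]
          · have := h.1 s i _ hij.symm hj hi
            omega
          all_goals simp [hrK]
        · by_cases hrj : s + 1 = i
          · subst hrj
            rw [stp_a s F K hsK hrK, stp_c s F _ (by simp)]
            have := h.1 s (s+1) K hij.symm hj hi
            omega
          · rw [stp_a s F K hsK hrK, stp_a s F _ (by simp [hsK, hij.symm]) (by simp [hrK, hrj])]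
            have a1 := h.1 s i K hij.symm hj hi
            have a2 := h.1 (s+1) i K hrj hrK hi
            omega
      · rw [stp_b, stp_b, stp_b, stp_b]
        · exact h.1 i j _ hij hi hj
        all_goals simp [*]

lemma gbz_cross {F : Finset ℕ → ℤ} (h : GBZ F) (s r i j k : ℕ) (L : Finset ℕ) (hr : r = s + 1)
    (hij : i < j) (hjk : j < k) (hs : s ∉ L) (hrL : r ∉ L) (hi : i ∉ L) (hj : j ∉ L) (hk : k ∉ L)
    (si : s ≠ i) (sj : s ≠ j) (sk : s ≠ k) (ri : r ≠ i) (rj : r ≠ j) (rk : r ≠ k) :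
    min (F (insert s (insert i (insert k L))) + F (insert r (insert j L)))
      (F (insert r (insert i (insert k L))) + F (insert s (insert j L))) =
    min (min (F (insert s (insert i (insert j L))) + F (insert r (insert k L)))
      (F (insert r (insert i (insert j L))) + F (insert s (insert k L))))
      (min (F (insert s (insert j (insert k L))) + F (insert r (insert i L)))
      (F (insert r (insert j (insert k L))) + F (insert s (insert i L)))) := by
  have sr : s < r := by omega
  have t1 := h.2 i j k (insert s L) hij hjk (by simp [*, si.symm]) (by simp [*, sj.symm]) (by simp [*, sk.symm])
  have t2 := h.2 i j k (insert r L) hij hjk (by simp [hi, ri.symm]) (by simp [hj, rj.symm]) (by simp [hk, rk.symm])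
  have cc : ∀ x y (K : Finset ℕ), F (insert x (insert y K)) = F (insert y (insert x K)) :=
    fun x y K => by rw [Finset.insert_comm]
  have ij : i ≠ j := by omega
  have jk : k ≠ j := by omega
  have g1 : ∀ x, x ∉ L → x ≠ j → x ∉ insert j L := fun x h1 h2 => by simp [h1, h2]
  have u1 := g1 s hs sj
  have u2 := g1 r hrL rj
  have u3 := g1 i hi ij
  have u4 := g1 k hk jk
  have e1 : F (insert s (insert i (insert k L))) = F (insert i (insert k (insert s L))) := by
    simp only [Finset.insert_comm]
  have e2 : F (insert r (insert i (insert k L))) = F (insert i (insert k (insert r L))) := by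
    simp only [Finset.insert_comm]
  have e3 : F (insert s (insert i (insert j L))) = F (insert i (insert j (insert s L))) := by
    simp only [Finset.insert_comm]
  have e4 : F (insert r (insert i (insert j L))) = F (insert i (insert j (insert r L))) := by
    simp only [Finset.insert_comm]
  have e5 : F (insert s (insert j (insert k L))) = F (insert j (insert k (insert s L))) := by
    simp only [Finset.insert_comm]
  have e6 : F (insert r (insert j (insert k L))) = F (insert j (insert k (insert r L))) := by
    simp only [Finset.insert_comm]
  by_cases c1 : s < i
  · have t3 := h.2 s r i (insert j L) sr (by omega) u1 u2 u3
    have t4 := h.2 s r k (insert j L) sr (by omega) u1 u2 u4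
    have p1 := pl3 h s r j k L sr (by omega) hjk hs hrL hj hk
    have p2 := pl3 h s r i j L sr (by omega) hij hs hrL hi hj
    refine crossA _ _ _ _ _ _ _ _ _ _ _ _ (F (insert s (insert r (insert j L)))) (F (insert i (insert j L))) (F (insert j (insert k L))) (F (insert s (insert r L))) ?_ ?_ ?_ ?_ ?_ ?_
    all_goals simp only [Finset.insert_comm] at t1 t2 t3 t4 p1 p2 ⊢
    all_goals omega
  by_cases c2 : s < j
  · have t3 := h.2 i s r (insert j L) (by omega) sr u3 u1 u2
    have t4 := h.2 s r k (insert j L) sr (by omega) u1 u2 u4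
    have p1 := pl3 h s r j k L sr (by omega) hjk hs hrL hj hk
    have p2 := pl3 h i s r j L (by omega) sr (by omega) hi hs hrL hj
    refine crossB _ _ _ _ _ _ _ _ _ _ _ _ (F (insert s (insert r (insert j L)))) (F (insert i (insert j L))) (F (insert j (insert k L))) (F (insert s (insert r L))) ?_ ?_ ?_ ?_ ?_ ?_
    all_goals simp only [Finset.insert_comm] at t1 t2 t3 t4 p1 p2 ⊢
    all_goals omega
  by_cases c3 : s < k
  · have t3 := h.2 i s r (insert j L) (by omega) sr u3 u1 u2
    have t4 := h.2 s r k (insert j L) sr (by omega) u1 u2 u4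
    have p1 := pl3 h j s r k L (by omega) sr (by omega) hj hs hrL hk
    have p2 := pl3 h i j s r L hij (by omega) sr hi hj hs hrL
    refine crossC _ _ _ _ _ _ _ _ _ _ _ _ (F (insert s (insert r (insert j L)))) (F (insert i (insert j L))) (F (insert j (insert k L))) (F (insert s (insert r L))) ?_ ?_ ?_ ?_ ?_ ?_
    all_goals simp only [Finset.insert_comm] at t1 t2 t3 t4 p1 p2 ⊢
    all_goals omega
  · have t3 := h.2 i s r (insert j L) (by omega) sr u3 u1 u2
    have t4 := h.2 k s r (insert j L) (by omega) sr u4 u1 u2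
    have p1 := pl3 h j k s r L hjk (by omega) sr hj hk hs hrL
    have p2 := pl3 h i j s r L hij (by omega) sr hi hj hs hrL
    refine crossD _ _ _ _ _ _ _ _ _ _ _ _ (F (insert s (insert r (insert j L)))) (F (insert i (insert j L))) (F (insert j (insert k L))) (F (insert s (insert r L))) ?_ ?_ ?_ ?_ ?_ ?_
    all_goals simp only [Finset.insert_comm] at t1 t2 t3 t4 p1 p2 ⊢
    all_goals omega

lemma min_add4 (a b c d : ℤ) : min a b + min c d = min (min (a+c) (b+d)) (min (a+d) (b+c)) := by
  omega

lemma bz2_arith (sik rik sj rj sij rij sk rk sjk rjk si ri : ℤ)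
    (T : sik + sj = min (sij + sk) (sjk + si)) (T2 : rik + rj = min (rij + rk) (rjk + ri))
    (X : min (sik + rj) (rik + sj) = min (min (sij + rk) (rij + sk)) (min (sjk + ri) (rjk + si))) :
    min sik rik + min sj rj = min (min sij rij + min sk rk) (min sjk rjk + min si ri) := by
  rw [min_add4, min_add4, min_add4, T, T2, X]
  ac_rfl

lemma gbz_stp2 {F : Finset ℕ → ℤ} (h : GBZ F) (s i j k : ℕ) (K : Finset ℕ) (hij : i < j)
    (hjk : j < k) (hi : i ∉ K) (hj : j ∉ K) (hk : k ∉ K) :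
    stp s F (insert i (insert k K)) + stp s F (insert j K) =
      min (stp s F (insert i (insert j K)) + stp s F (insert k K))
        (stp s F (insert j (insert k K)) + stp s F (insert i K)) := by
  have nij : i ≠ j := by omega
  have njk : j ≠ k := by omega
  have nik : i ≠ k := by omega
  have T := h.2 i j k K hij hjk hi hj hk
  by_cases hrK : s + 1 ∈ K
  · rw [stp_c, stp_c, stp_c, stp_c, stp_c, stp_c]
    · exact T
    all_goals simp [hrK]
  by_cases hsK : s ∈ K
  · obtain ⟨L, hL, rfl⟩ : ∃ L, s ∉ L ∧ insert s L = K :=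
      ⟨K.erase s, by simp, Finset.insert_erase hsK⟩
    simp only [Finset.mem_insert, not_or] at hi hj hk hrK
    obtain ⟨si, hi⟩ := hi
    obtain ⟨sj, hj⟩ := hj
    obtain ⟨sk, hk⟩ := hk
    obtain ⟨-, hrL⟩ := hrK
    obtain ⟨r, hr⟩ : ∃ r, r = s + 1 := ⟨_, rfl⟩
    have A : ∀ K, s ∉ K → s + 1 ∉ K → stp s F (insert s K) = min (F (insert s K)) (F (insert (s+1) K)) := stp_a s F
    have C : ∀ K, s + 1 ∈ K → stp s F K = F K := stp_c s F
    rw [← hr] at hrL A C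
    have v : ∀ x y, r ≠ x → r ≠ y → s ≠ x → s ≠ y → stp s F (insert x (insert y (insert s L))) =
       min (F (insert s (insert x (insert y L)))) (F (insert r (insert x (insert y L)))) := by
      intro x y h1 h2 h3 h4
      rw [Finset.insert_comm y s, Finset.insert_comm x s, A _ (by simp [h3, h4, hL]) (by simp [h1, h2, hrL])]
    have v' : ∀ x, r ≠ x → s ≠ x → stp s F (insert x (insert s L)) =
       min (F (insert s (insert x L))) (F (insert r (insert x L))) := by
      intro x h1 h3
      rw [Finset.insert_comm x s, A _ (by simp [h3, hL]) (by simp [h1, hrL])]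
    by_cases ri : r = i
    · subst ri
      have T2 := h.2 s j k (insert r L) (by omega) hjk (by simp only [Finset.mem_insert]; grind) (by simp only [Finset.mem_insert]; grind) (by simp only [Finset.mem_insert]; grind)
      rw [C (insert r _) (by simp), C (insert r _) (by simp), C (insert r _) (by simp),
        v' j (by omega) (by omega), v' k (by omega) (by omega), v j k (by omega) (by omega) (by omega) (by omega)]
      simp only [Finset.insert_comm] at T T2 ⊢
      omega
    by_cases rj : r = j
    · subst rj
      have T2 := h.2 i s k (insert r L) (by omega) (by omega) (by simp only [Finset.mem_insert]; grind) (by simp only [Finset.mem_insert]; grind) (by simp only [Finset.mem_insert]; grind)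
      rw [C (insert r _) (by simp), C (insert r _) (by simp), C (insert i (insert r _)) (by simp),
        v' i (by omega) (by omega), v' k (by omega) (by omega), v i k (by omega) (by omega) (by omega) (by omega)]
      simp only [Finset.insert_comm] at T T2 ⊢
      omega
    by_cases rk : r = k
    · subst rk
      have T2 := h.2 i j s (insert r L) (by omega) (by omega) (by simp only [Finset.mem_insert]; grind) (by simp only [Finset.mem_insert]; grind) (by simp only [Finset.mem_insert]; grind)
      rw [C (insert r _) (by simp), C (insert j (insert r _)) (by simp), C (insert i (insert r _)) (by simp),
        v' i (by omega) (by omega), v' j (by omega) (by omega), v i j (by omega) (by omega) (by omega) (by omega)]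
      simp only [Finset.insert_comm] at T T2 ⊢
      omega
    have X := gbz_cross h s r i j k L hr hij hjk hL hrL hi hj hk (by omega) (by omega) (by omega) ri rj rk
    have T2 := h.2 i j k (insert r L) hij hjk (by simp only [Finset.mem_insert]; grind) (by simp only [Finset.mem_insert]; grind) (by simp only [Finset.mem_insert]; grind)
    rw [v i k ri rk (by omega) (by omega), v i j ri rj (by omega) (by omega), v j k rj rk (by omega) (by omega),
       v' i ri (by omega), v' j rj (by omega), v' k rk (by omega)]
    have w : ∀ x y z, F (insert x (insert y (insert z L))) = F (insert z (insert x (insert y L))) := by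
      intro x y z
      rw [Finset.insert_comm y z, Finset.insert_comm x z]
    have w' : ∀ x z, F (insert x (insert z L)) = F (insert z (insert x L)) := by
      intro x z
      rw [Finset.insert_comm x z]
    rw [w i k s, w i j s, w j k s, w' i s, w' j s, w' k s] at T
    rw [w i k r, w i j r, w j k r, w' i r, w' j r, w' k r] at T2
    exact bz2_arith _ _ _ _ _ _ _ _ _ _ _ _ T T2 X
  have A := stp_a s F
  have B := stp_b s F
  have C := stp_c s F
  by_cases si : s = i
  · subst si
    rw [B (insert j K) (by simp only [Finset.mem_insert]; grind), B (insert k K) (by simp only [Finset.mem_insert]; grind), B (insert j (insert k K)) (by simp only [Finset.mem_insert]; grind),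
      A _ hi hrK, A (insert k K) (by simp only [Finset.mem_insert]; grind) (by simp only [Finset.mem_insert]; grind)]
    by_cases rj : s + 1 = j
    · subst rj
      rw [C (insert s (insert (s+1) K)) (by simp)]
      omega
    · have T2 := h.2 (s+1) j k K (by omega) hjk hrK hj hk
      rw [A (insert j K) (by simp only [Finset.mem_insert]; grind) (by simp only [Finset.mem_insert]; grind)]
      omega
  by_cases sj : s = j
  · subst sj
    rw [B (insert i K) (by simp only [Finset.mem_insert]; grind), B (insert k K) (by simp only [Finset.mem_insert]; grind), B (insert i (insert k K)) (by simp only [Finset.mem_insert]; grind),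
      A _ hj hrK, Finset.insert_comm i s K, A (insert i K) (by simp only [Finset.mem_insert]; grind) (by simp only [Finset.mem_insert]; grind)]
    by_cases rk : s + 1 = k
    · subst rk
      rw [C (insert s (insert (s+1) K)) (by simp)]
      simp only [Finset.insert_comm] at T ⊢
      omega
    · have T2 := h.2 i (s+1) k K (by omega) (by omega) hi hrK hk
      rw [A (insert k K) (by simp only [Finset.mem_insert]; grind) (by simp only [Finset.mem_insert]; grind)]
      simp only [Finset.insert_comm] at T T2 ⊢
      omega
  by_cases sk : s = k
  · subst sk
    have T2 := h.2 i j (s+1) K (by omega) (by omega) hi hj hrK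
    rw [B (insert i K) (by simp only [Finset.mem_insert]; grind), B (insert j K) (by simp only [Finset.mem_insert]; grind), B (insert i (insert j K)) (by simp only [Finset.mem_insert]; grind),
      A _ hk hrK, Finset.insert_comm i s K, A (insert i K) (by simp only [Finset.mem_insert]; grind) (by simp only [Finset.mem_insert]; grind), Finset.insert_comm j s K, A (insert j K) (by simp only [Finset.mem_insert]; grind) (by simp only [Finset.mem_insert]; grind)]
    simp only [Finset.insert_comm] at T T2 ⊢
    omega
  rw [B, B, B, B, B, B]
  · exact T
  all_goals simp [*]


lemma gbz_stp {F : Finset ℕ → ℤ} (h : GBZ F) (s : ℕ) : GBZ (stp s F) :=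
  ⟨fun i j K => gbz_stp1 h s i j K, fun i j k K => gbz_stp2 h s i j k K⟩

lemma gbz_tw {F : Finset ℕ → ℤ} (h : GBZ F) (w : ℕ → ℤ) : GBZ (fun K => F K + ∑ c ∈ K, w c) := by
  constructor
  · intro i j K hij hi hj
    have := h.1 i j K hij hi hj
    simp only
    rw [Finset.sum_insert hi, Finset.sum_insert hj, Finset.sum_insert (by simp [hij, hi]),
      Finset.sum_insert hj]
    omega
  · intro i j k K hij hjk hi hj hk
    have := h.2 i j k K hij hjk hi hj hk
    have h1 : i ≠ j := by omega
    have h2 : i ≠ k := by omega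
    have h3 : j ≠ k := by omega
    simp only
    rw [Finset.sum_insert (a := i) (s := insert k K) (by simp [h2, hi]),
      Finset.sum_insert (a := i) (s := insert j K) (by simp [h1, hi]),
      Finset.sum_insert (a := j) (s := insert k K) (by simp [h3, hj]),
      Finset.sum_insert hi, Finset.sum_insert hj, Finset.sum_insert hk]
    omega

def swp : ℕ → ℕ → (Finset ℕ → ℤ) → Finset ℕ → ℤ
  | 0, _, F => F
  | m+1, s, F => stp s (swp m (s+1) F)

lemma gbz_swp {F : Finset ℕ → ℤ} (h : GBZ F) : ∀ m s, GBZ (swp m s F)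
  | 0, _ => h
  | m+1, s => gbz_stp (gbz_swp h m (s+1)) s

def SM (l : ℕ) (f : ℕ → ℕ) : Prop := ∀ p, 1 ≤ p → p + 1 ≤ l → f p < f (p+1)

def imf (l : ℕ) (f : ℕ → ℕ) : Finset ℕ := (Finset.Icc 1 l).image f

lemma SM.lt {l : ℕ} {f : ℕ → ℕ} (h : SM l f) {p : ℕ} (hp : 1 ≤ p) :
    ∀ q, p < q → q ≤ l → f p < f q := by
  intro q
  induction q with
  | zero => intro h; omega
  | succ q ih =>
    intro h1 h2
    have := h q (by omega) h2
    rcases Nat.lt_or_ge p q with h3 | h3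
    · exact (ih h3 (by omega)).trans this
    · have : p = q := by omega
      subst this; assumption

lemma SM.inj {l : ℕ} {f : ℕ → ℕ} (h : SM l f) {p q : ℕ} (hp : 1 ≤ p) (hp' : p ≤ l) (hq : 1 ≤ q)
    (hq' : q ≤ l) (e : f p = f q) : p = q := by
  rcases Nat.lt_trichotomy p q with h1 | h1 | h1
  · have := h.lt hp q h1 hq'; omega
  · exact h1
  · have := h.lt hq p h1 hp'; omega

lemma mem_imf {l : ℕ} {f : ℕ → ℕ} {x : ℕ} : x ∈ imf l f ↔ ∃ p, 1 ≤ p ∧ p ≤ l ∧ f p = x := by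
  simp [imf, and_assoc]

def Adp (N l : ℕ) (f g : ℕ → ℕ) (s : ℕ) : Prop :=
  (∀ p, 1 ≤ p → p ≤ l → f p ≤ g p ∧ g p ≤ N ∧ (f p < s → g p = f p)) ∧
  ∀ p, 1 ≤ p → p + 1 ≤ l → g p < f (p+1)

lemma imf_congr {l : ℕ} {f g : ℕ → ℕ} (h : ∀ p, 1 ≤ p → p ≤ l → f p = g p) : imf l f = imf l g := by
  ext x
  simp only [mem_imf]
  constructor
  · rintro ⟨p, h1, h2, h3⟩; exact ⟨p, h1, h2, by rw [← h p h1 h2]; exact h3⟩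
  · rintro ⟨p, h1, h2, h3⟩; exact ⟨p, h1, h2, by rw [h p h1 h2]; exact h3⟩

lemma imf_update {l : ℕ} {f : ℕ → ℕ} (h : SM l f) {p : ℕ} (h1 : 1 ≤ p) (h2 : p ≤ l) (v : ℕ) :
    imf l (Function.update f p v) = insert v ((imf l f).erase (f p)) := by
  ext x
  simp only [mem_imf, Finset.mem_insert, Finset.mem_erase]
  constructor
  · rintro ⟨q, h3, h4, h5⟩
    by_cases hq : q = p
    · subst hq; simp at h5; exact Or.inl h5.symm
    · rw [Function.update_of_ne hq] at h5
      refine Or.inr ⟨?_, q, h3, h4, h5⟩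
      intro h6
      exact hq (h.inj h3 h4 h1 h2 (h5.trans h6))
  · rintro (h3 | ⟨h3, q, h4, h5, h6⟩)
    · exact ⟨p, h1, h2, by simp [h3]⟩
    · refine ⟨q, h4, h5, ?_⟩
      rw [Function.update_of_ne]
      · exact h6
      · rintro rfl; exact h3 h6.symm

lemma SM_update {l : ℕ} {f : ℕ → ℕ} (h : SM l f) {p : ℕ} (h1 : 1 ≤ p) (h2 : p ≤ l)
    (h3 : f p + 1 ∉ imf l f) : SM l (Function.update f p (f p + 1)) := by
  intro q hq hq'
  have := h q hq hq'
  by_cases e1 : q = p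
  · subst e1
    rw [Function.update_self, Function.update_of_ne (by omega)]
    have : f (q+1) ≠ f q + 1 := fun h4 => h3 (mem_imf.2 ⟨q+1, by omega, hq', h4⟩)
    omega
  · by_cases e2 : q + 1 = p
    · subst e2
      rw [Function.update_self, Function.update_of_ne (by omega)]
      omega
    · rw [Function.update_of_ne e1, Function.update_of_ne e2]; exact this

lemma stp_le (s : ℕ) (F : Finset ℕ → ℤ) (K : Finset ℕ) : stp s F K ≤ F K := by
  unfold stp; split_ifs
  · exact min_le_left _ _
  · exact le_rfl

lemma swp_lower (N l : ℕ) (H : Finset ℕ → ℤ) : ∀ m s, s + m = N → ∀ f g, SM l f → Adp N l f g s →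
    swp m s H (imf l f) ≤ H (imf l g) := by
  intro m
  induction m with
  | zero =>
    intro s hs f g hf ha
    rw [imf_congr (f := f) (g := g)]
    · exact le_rfl
    · intro p h1 h2
      have := ha.1 p h1 h2
      omega
  | succ m ih =>
    intro s hs f g hf ha
    show stp s _ _ ≤ _
    by_cases c : ∃ p, 1 ≤ p ∧ p ≤ l ∧ f p = s ∧ s < g p
    · obtain ⟨p, h1, h2, h3, h4⟩ := c
      have h5 : f p + 1 ∉ imf l f := by
        rw [mem_imf]
        rintro ⟨q, q1, q2, q3⟩
        have hpq : p < q := by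
          by_contra hc
          rcases Nat.lt_or_ge q p with h6 | h6
          · have := hf.lt q1 p h6 h2; omega
          · have : p = q := by omega
            subst this; omega
        have h7 := ha.2 p h1 (by omega)
        rcases Nat.lt_or_ge (p+1) q with h6 | h6
        · have := hf.lt (p := p+1) (by omega) q h6 q2; omega
        · have : q = p + 1 := by omega
          subst this; omega
      have h6 : s ∈ imf l f ∧ s + 1 ∉ imf l f := ⟨mem_imf.2 ⟨p, h1, h2, h3⟩, h3 ▸ h5⟩
      rw [stp, if_pos h6]
      refine (min_le_right _ _).trans ?_
      have h7 := imf_update hf h1 h2 (f p + 1)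
      rw [h3] at h7
      rw [← h7]
      refine ih (s+1) (by omega) _ g (by rw [← h3]; exact SM_update hf h1 h2 h5) ⟨?_, ?_⟩
      · intro q q1 q2
        have := ha.1 q q1 q2
        by_cases e : q = p
        · subst e; rw [Function.update_self]; omega
        · rw [Function.update_of_ne e]
          have : f q ≠ s := fun h => e (hf.inj q1 q2 h1 h2 (h.trans h3.symm))
          omega
      · intro q q1 q2
        have := ha.2 q q1 q2
        by_cases e : q + 1 = p
        · subst e; rw [Function.update_self]; omega
        · rw [Function.update_of_ne e]; exact this
    · refine (stp_le _ _ _).trans (ih (s+1) (by omega) f g hf ⟨?_, ha.2⟩)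
      intro q q1 q2
      have h1 := ha.1 q q1 q2
      have h2 : ¬ (f q = s ∧ s < g q) := fun h => c ⟨q, q1, q2, h⟩
      omega

lemma swp_attain (N l : ℕ) (H : Finset ℕ → ℤ) : ∀ m s, s + m = N → ∀ f, SM l f →
    (∀ p, 1 ≤ p → p ≤ l → f p ≤ N) → ∃ g, Adp N l f g s ∧ 
    swp m s H (imf l f) = H (imf l g) := by
  intro m
  induction m with
  | zero =>
    intro s hs f hf hN
    exact ⟨f, ⟨fun p h1 h2 => ⟨le_rfl, hN p h1 h2, fun _ => rfl⟩, hf⟩, rfl⟩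
  | succ m ih =>
    intro s hs f hf hN
    have triv : ∃ g, Adp N l f g s ∧ swp m (s+1) H (imf l f) = H (imf l g) := by
      obtain ⟨g, ha, hg⟩ := ih (s+1) (by omega) f hf hN
      refine ⟨g, ⟨?_, ha.2⟩, hg⟩
      intro p h1 h2
      have := ha.1 p h1 h2
      exact ⟨this.1, this.2.1, fun h => this.2.2 (by omega)⟩
    show ∃ g, Adp N l f g s ∧ stp s _ _ = _
    unfold stp
    split_ifs with c
    · rcases min_choice (swp m (s+1) H (imf l f)) (swp m (s+1) H (insert (s+1) ((imf l f).erase s))) with h | h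
      · rw [h]; exact triv
      · rw [h]
        obtain ⟨c1, c2⟩ := c
        obtain ⟨p, h1, h2, h3⟩ := mem_imf.1 c1
        have h7 := imf_update hf h1 h2 (f p + 1)
        have h8 := SM_update hf h1 h2 (by rw [h3]; exact c2)
        rw [h3] at h7 h8
        rw [← h7]
        obtain ⟨g, ha, hg⟩ := ih (s+1) (by omega) _ h8 (by
          intro q q1 q2
          by_cases e : q = p
          · subst e; rw [Function.update_self]; omega
          · rw [Function.update_of_ne e]; exact hN q q1 q2)
        refine ⟨g, ⟨?_, ?_⟩, hg⟩
        · intro q q1 q2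
          have := ha.1 q q1 q2
          by_cases e : q = p
          · subst e; rw [Function.update_self] at this; omega
          · rw [Function.update_of_ne e] at this
            omega
        · intro q q1 q2
          have h10 := ha.2 q q1 q2
          by_cases e : q + 1 = p
          · subst e
            have h11 := ha.1 q q1 (by omega)
            have h12 := hf q q1 q2
            rw [Function.update_of_ne (by omega)] at h11
            omega
          · rw [Function.update_of_ne e] at h10; exact h10
    · exact triv

lemma Adp.sm {N l : ℕ} {f g : ℕ → ℕ} {s : ℕ} (h : Adp N l f g s) : SM l g := by
  intro p h1 h2
  have := h.2 p h1 h2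
  have := (h.1 (p+1) (by omega) h2).1
  omega

lemma sum_imf {l : ℕ} {f : ℕ → ℕ} (h : SM l f) (w : ℕ → ℤ) :
    ∑ c ∈ imf l f, w c = ∑ p ∈ Finset.Icc 1 l, w (f p) := by
  unfold imf
  rw [Finset.sum_image]
  intro p hp q hq e
  simp only [Finset.coe_Icc, Set.mem_Icc] at hp hq
  exact h.inj hp.1 hp.2 hq.1 hq.2 e

def Phi (N : ℕ) (a : ℤ → ℤ → ℤ) : ℕ → ℕ → Finset ℕ → ℤ
  | 0, _ => fun _ => 0
  | m+1, d => swp N 0 (fun K => Phi N a m (d+1) K + ∑ c ∈ K, a (c:ℤ) ((c:ℤ) + ((d:ℤ) + 1)))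

lemma gbz_Phi (N : ℕ) (a : ℤ → ℤ → ℤ) : ∀ m d, GBZ (Phi N a m d)
  | 0, _ => ⟨fun _ _ _ _ _ _ => by simp [Phi], fun _ _ _ _ _ _ _ _ _ => by simp [Phi]⟩
  | m+1, d => gbz_swp (gbz_tw (gbz_Phi N a m (d+1)) _) N 0

def ET (N m l : ℕ) (f : ℕ → ℕ) (e : ℕ → ℕ → ℕ) : Prop :=
  (∀ p, 1 ≤ p → p ≤ l → e p 0 = f p) ∧
  (∀ p x, 1 ≤ p → p ≤ l → x < m → e p x ≤ e p (x+1) ∧ e p (x+1) ≤ N) ∧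
  (∀ p x, 1 ≤ p → p + 1 ≤ l → x < m → e p (x+1) < e (p+1) x)

def esum (a : ℤ → ℤ → ℤ) (m d l : ℕ) (e : ℕ → ℕ → ℕ) : ℤ :=
  ∑ x ∈ Finset.range m, ∑ p ∈ Finset.Icc 1 l, a (e p (x+1)) ((e p (x+1) : ℤ) + ((d:ℤ) + (x:ℤ) + 1))

lemma Phi_lower (N l : ℕ) (a : ℤ → ℤ → ℤ) : ∀ m d f e, SM l f → ET N m l f e →
    Phi N a m d (imf l f) ≤ esum a m d l e := by
  intro m
  induction m with
  | zero => intro d f e _ _; simp [Phi, esum]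
  | succ m ih =>
    intro d f e hf he
    have ha : Adp N l f (fun p => e p 1) 0 := by
      refine ⟨?_, ?_⟩
      · intro p h1 h2
        have := he.2.1 p 0 h1 h2 (by omega)
        have := he.1 p h1 h2
        simp only [zero_add] at *
        omega
      · intro p h1 h2
        have := he.2.2 p 0 h1 h2 (by omega)
        have := he.1 (p+1) (by omega) h2
        simp only [zero_add] at *
        omega
    have h1 := swp_lower N l (fun K => Phi N a m (d+1) K + ∑ c ∈ K, a (c:ℤ) ((c:ℤ) + ((d:ℤ) + 1))) N 0
      (by omega) f _ hf ha
    have h2 := ih (d+1) (fun p => e p 1) (fun p x => e p (x+1)) ha.sm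
      ⟨fun _ _ _ => rfl, fun p x h1 h2 h3 => he.2.1 p (x+1) h1 h2 (by omega),
        fun p x h1 h2 h3 => he.2.2 p (x+1) h1 h2 (by omega)⟩
    refine h1.trans ?_
    rw [sum_imf ha.sm]
    unfold esum at h2 ⊢
    rw [Finset.sum_range_succ']
    refine add_le_add (h2.trans_eq ?_) (le_of_eq ?_)
    · refine Finset.sum_congr rfl fun x _ => Finset.sum_congr rfl fun p _ => ?_
      congr 1; push_cast; ring
    · refine Finset.sum_congr rfl fun p _ => ?_
      congr 1

lemma Phi_attain (N l : ℕ) (a : ℤ → ℤ → ℤ) : ∀ m d f, SM l f → (∀ p, 1 ≤ p → p ≤ l → f p ≤ N) →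
    ∃ e, ET N m l f e ∧ Phi N a m d (imf l f) = esum a m d l e := by
  intro m
  induction m with
  | zero =>
    intro d f _ _
    exact ⟨fun p _ => f p, ⟨fun _ _ _ => rfl, fun _ _ _ _ h => by omega, fun _ _ _ _ h => by omega⟩,
      by simp [Phi, esum]⟩
  | succ m ih =>
    intro d f hf hN
    obtain ⟨g, ha, hg⟩ := swp_attain N l (fun K => Phi N a m (d+1) K + ∑ c ∈ K, a (c:ℤ) ((c:ℤ) + ((d:ℤ) + 1))) N 0
      (by omega) f hf hN
    obtain ⟨e, he, h2⟩ := ih (d+1) g ha.sm (fun p h1 h2 => (ha.1 p h1 h2).2.1)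
    refine ⟨fun p x => if x = 0 then f p else e p (x-1), ⟨?_, ?_, ?_⟩, ?_⟩
    · intro p _ _; simp
    · intro p x h1 h2 h3
      rcases x with _ | x
      · have := ha.1 p h1 h2
        have := he.1 p h1 h2
        simp; omega
      · have := he.2.1 p x h1 h2 (by omega)
        simpa using this
    · intro p x h1 h2 h3
      rcases x with _ | x
      · have := ha.2 p h1 h2
        have := he.1 p h1 (by omega)
        simp; omega
      · have := he.2.2 p x h1 h2 (by omega)
        simpa using this
    · refine Eq.trans hg ?_
      rw [sum_imf ha.sm, h2]
      unfold esum
      rw [Finset.sum_range_succ']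
      refine congrArg₂ (· + ·) ?_ ?_
      · refine Finset.sum_congr rfl fun x _ => Finset.sum_congr rfl fun p _ => ?_
        simp only [Nat.add_eq_zero_iff, one_ne_zero, and_false, if_false, Nat.add_sub_cancel]
        congr 1; push_cast; ring
      · refine Finset.sum_congr rfl fun p hp => ?_
        rw [Finset.mem_Icc] at hp
        have := he.1 p hp.1 hp.2
        simp [this]


lemma kth_eq (K : Finset ℕ) (p : ℕ) (h1 : 1 ≤ p) (h2 : p ≤ K.card) :
    kth K p = K.orderEmbOfFin rfl ⟨p - 1, by omega⟩ := by
  rw [Finset.orderEmbOfFin_apply, kth, List.getD_eq_getElem]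
  · rfl

lemma kth_SM (K : Finset ℕ) : SM K.card (kth K) := by
  intro p h1 h2
  rw [kth_eq K p h1 (by omega), kth_eq K (p+1) (by omega) h2]
  apply (K.orderEmbOfFin rfl).strictMono
  rw [Fin.mk_lt_mk]; omega

lemma kth_imf (K : Finset ℕ) : imf K.card (kth K) = K := by
  ext x
  rw [mem_imf]
  constructor
  · rintro ⟨p, h1, h2, rfl⟩
    rw [kth_eq K p h1 h2]
    exact Finset.orderEmbOfFin_mem _ _ _
  · intro hx
    have : x ∈ Set.range (K.orderEmbOfFin rfl) := by rw [Finset.range_orderEmbOfFin]; exact hx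
    obtain ⟨q, rfl⟩ := this
    refine ⟨q + 1, by omega, by omega, ?_⟩
    rw [kth_eq K _ (by omega) (by omega)]
    congr 1

lemma kth_mem {K : Finset ℕ} {p : ℕ} (h1 : 1 ≤ p) (h2 : p ≤ K.card) : kth K p ∈ K := by
  rw [kth_eq K p h1 h2]
  exact Finset.orderEmbOfFin_mem _ _ _

lemma kt_ge {K : Finset ℕ} {c : ℕ → ℕ → ℤ} (hc : IsKTab K c) (p : ℕ) (hp : 1 ≤ p) :
    ∀ x, p + x ≤ K.card → (kth K p : ℤ) ≤ c p (p + x) := by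
  intro x
  induction x with
  | zero => intro h; rw [add_zero, hc.1 p hp (by omega)]
  | succ x ih => intro h; exact (ih (by omega)).trans (hc.2.1 p (p+x) hp (by omega) h)

lemma kt_le {K : Finset ℕ} {c : ℕ → ℕ → ℤ} (hc : IsKTab K c) : ∀ (x p : ℕ), 1 ≤ p →
    p + x ≤ K.card → c p (p + x) + x ≤ kth K (p + x) := by
  intro x
  induction x with
  | zero => intro p hp h; rw [add_zero, hc.1 p hp (by omega)]; simp
  | succ x ih =>
    intro p hp h
    have h1 := ih (p+1) (by omega) (by omega)
    have h2 := hc.2.2 p (p+1+x) hp (by omega) (by omega)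
    have : p + (x + 1) = p + 1 + x := by omega
    rw [this]; push_cast; omega

lemma tabSum_eq (n : ℕ) (a : ℤ → ℤ → ℤ) (K : Finset ℕ) (c : ℕ → ℕ → ℤ) (hl : K.card ≤ n + 1) :
    tabSum a K c = ∑ p ∈ Finset.Icc 1 K.card, ∑ x ∈ Finset.range n,
      if p + (x + 1) ≤ K.card then a (c p (p + (x+1))) (c p (p + (x+1)) + ((x:ℤ) + 1)) else 0 := by
  unfold tabSum
  refine Finset.sum_congr rfl fun p hp => ?_
  rw [Finset.mem_Icc] at hp
  rw [← Finset.sum_filter]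
  symm
  refine Finset.sum_bij (fun x _ => p + (x+1)) ?_ ?_ ?_ ?_
  · intro x hx
    simp only [Finset.mem_filter, Finset.mem_range, Finset.mem_Icc] at hx ⊢
    omega
  · intro x _ y _ h; omega
  · intro q hq
    rw [Finset.mem_Icc] at hq
    refine ⟨q - p - 1, ?_, by omega⟩
    simp only [Finset.mem_filter, Finset.mem_range]
    omega
  · intro x _
    congr 2
    push_cast; ring

lemma esum_eq (n : ℕ) (a : ℤ → ℤ → ℤ) (l : ℕ) (e : ℕ → ℕ → ℕ) :
    esum a n 0 l e = ∑ p ∈ Finset.Icc 1 l, ∑ x ∈ Finset.range n,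
       a (e p (x+1)) ((e p (x+1) : ℤ) + ((x:ℤ) + 1)) := by
  unfold esum
  rw [Finset.sum_comm]
  simp

lemma Phi_isLeast (n : ℕ) (a : ℤ → ℤ → ℤ) (ha : IsLusztig n a) (K : Finset ℕ)
    (hK : K ⊆ Finset.Icc 1 (n+1)) :
    IsLeast {z : ℤ | ∃ c : ℕ → ℕ → ℤ, IsKTab K c ∧ z = tabSum a K c} (Phi (n+1) a n 0 K) := by
  have hl : K.card ≤ n + 1 := by simpa using Finset.card_le_card hK
  have hb : ∀ p, 1 ≤ p → p ≤ K.card → 1 ≤ kth K p ∧ kth K p ≤ n + 1 := fun p h1 h2 =>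
    Finset.mem_Icc.1 (hK (kth_mem h1 h2))
  have lower : ∀ c, IsKTab K c → Phi (n+1) a n 0 K ≤ tabSum a K c := by
    intro c hc
    obtain ⟨e, hE⟩ : ∃ e : ℕ → ℕ → ℕ, e = fun p x => if p + x ≤ K.card then (c p (p+x)).toNat else n + 1 + p - K.card := ⟨_, rfl⟩
    have e1 : ∀ p x, 1 ≤ p → p + x ≤ K.card → (e p x : ℤ) = c p (p+x) := by
      intro p x hp h
      have h1 := kt_ge hc p hp x h
      rw [hE]; simp only [if_pos h]; omega
    have e2 : ∀ p x, ¬ (p + x ≤ K.card) → e p x = n + 1 + p - K.card := by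
      intro p x h; rw [hE]; simp only [if_neg h]
    have hET : ET (n+1) n K.card (kth K) e := by
      refine ⟨?_, ?_, ?_⟩
      · intro p h1 h2
        have := e1 p 0 h1 h2
        rw [add_zero, hc.1 p h1 h2] at this
        exact_mod_cast this
      · intro p x h1 h2 h3
        by_cases c1 : p + (x+1) ≤ K.card
        · have := e1 p x h1 (by omega)
          have := e1 p (x+1) h1 c1
          have := hc.2.1 p (p+x) h1 (by omega) (by omega)
          have h6 := kt_le hc (x+1) p h1 c1
          have := hb (p + (x+1)) (by omega) c1
          rw [← add_assoc] at *
          omega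
        · have := e2 p (x+1) c1
          by_cases c2 : p + x ≤ K.card
          · have := e1 p x h1 c2
            have h6 := kt_le hc x p h1 c2
            have := hb (p + x) (by omega) c2
            omega
          · have := e2 p x c2
            omega
      · intro p x h1 h2 h3
        by_cases c1 : p + (x+1) ≤ K.card
        · have h4 := e1 (p+1) x (by omega) (by omega)
          have h5 := e1 p (x+1) h1 c1
          have h6 := hc.2.2 p (p+1+x) h1 (by omega) (by omega)
          have : p + (x+1) = p + 1 + x := by omega
          rw [this] at h5
          omega
        · have := e2 p (x+1) c1
          have := e2 (p+1) x (by omega)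
          omega
    have h1 := Phi_lower (n+1) K.card a n 0 (kth K) e (kth_SM K) hET
    rw [kth_imf] at h1
    refine h1.trans_eq ?_
    rw [esum_eq, tabSum_eq n a K c hl]
    refine Finset.sum_congr rfl fun p hp => Finset.sum_congr rfl fun x hx => ?_
    rw [Finset.mem_Icc] at hp
    split_ifs with c1
    · rw [e1 p (x+1) hp.1 c1]
    · apply ha.2
      have := e2 p (x+1) c1
      rintro ⟨_, _, h3⟩
      omega
  refine ⟨?_, ?_⟩
  · obtain ⟨e, he, h1⟩ := Phi_attain (n+1) K.card a n 0 (kth K) (kth_SM K) (fun p h1 h2 => (hb p h1 h2).2)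
    rw [kth_imf] at h1
    have hc : IsKTab K (fun p q => (e p (q - p) : ℤ)) := by
      refine ⟨?_, ?_, ?_⟩
      · intro p h2 h3
        have := he.1 p h2 h3
        simp [this]
      · intro p q h2 h3 h4
        have := (he.2.1 p (q-p) h2 (by omega) (by omega)).1
        have h5 : q + 1 - p = q - p + 1 := by omega
        simp only [h5]; exact_mod_cast this
      · intro p q h2 h3 h4
        have := he.2.2 p (q-(p+1)) h2 (by omega) (by omega)
        have h5 : q - p = q - (p+1) + 1 := by omega
        simp only [h5]; exact_mod_cast this
    refine ⟨_, hc, le_antisymm (lower _ hc) ?_⟩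
    rw [h1, esum_eq, tabSum_eq n a K _ hl]
    refine Finset.sum_le_sum fun p hp => Finset.sum_le_sum fun x hx => ?_
    split_ifs with c1
    · simp
    · exact ha.1 _ _
  · rintro z ⟨c, hc, rfl⟩
    exact lower c hc

lemma kth_Icc (i j p : ℕ) (hp : 1 ≤ p) (h : p ≤ (Finset.Icc i j).card) :
    kth (Finset.Icc i j) p = i + p - 1 := by
  have hc : (Finset.Icc i j).card = j + 1 - i := by simp
  have h1 := kth_SM (Finset.Icc i j)
  have lo : ∀ x, x + 1 ≤ (Finset.Icc i j).card → i + x ≤ kth (Finset.Icc i j) (x+1) := by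
    intro x
    induction x with
    | zero => intro h; exact (Finset.mem_Icc.1 (kth_mem (by omega) h)).1
    | succ x ih =>
      intro h
      have := ih (by omega)
      have := h1 (x+1) (by omega) h
      omega
  have hi : ∀ x, x < (Finset.Icc i j).card → kth (Finset.Icc i j) ((Finset.Icc i j).card - x) + x ≤ j := by
    intro x
    induction x with
    | zero => intro h; exact (Finset.mem_Icc.1 (kth_mem (by omega) (by omega))).2
    | succ x ih =>
      intro h
      have := ih (by omega)
      have := h1 ((Finset.Icc i j).card - (x+1)) (by omega) (by omega)
      have e : (Finset.Icc i j).card - (x+1) + 1 = (Finset.Icc i j).card - x := by omega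
      rw [e] at this
      omega
  have a1 := lo (p-1) (by omega)
  have a2 := hi ((Finset.Icc i j).card - p) (by omega)
  have e1 : p - 1 + 1 = p := by omega
  have e2 : (Finset.Icc i j).card - ((Finset.Icc i j).card - p) = p := by omega
  rw [e1] at a1; rw [e2] at a2
  omega

def wt (a : ℤ → ℤ → ℤ) (k : ℕ) : ℤ := ∑ s ∈ Finset.Icc 1 (k - 1), a (s : ℤ) (k : ℤ)

lemma tabSum_Icc (a : ℤ → ℤ → ℤ) (i j : ℕ) (hi : 1 ≤ i) (c : ℕ → ℕ → ℤ)
    (hc : IsKTab (Finset.Icc i j) c) :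
    tabSum a (Finset.Icc i j) c = ∑ k ∈ Finset.Icc i j, ∑ s ∈ Finset.Icc i (k-1), a (s:ℤ) (k:ℤ) := by
  have hcard : (Finset.Icc i j).card = j + 1 - i := by simp
  have key : ∀ p q, 1 ≤ p → p ≤ q → q ≤ (Finset.Icc i j).card → c p q = i + p - 1 := by
    intro p q h1 h2 h3
    have a1 := kt_ge hc p h1 (q-p) (by omega)
    have a2 := kt_le hc (q-p) p h1 (by omega)
    rw [kth_Icc i j p h1 (by omega)] at a1
    have e : p + (q - p) = q := by omega
    rw [e] at a1 a2
    rw [kth_Icc i j q (by omega) h3] at a2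
    omega
  unfold tabSum
  rw [Finset.sum_sigma', Finset.sum_sigma']
  refine Finset.sum_bij (fun x _ => ⟨i + x.2 - 1, i + x.1 - 1⟩) ?_ ?_ ?_ ?_
  · rintro ⟨p, q⟩ h
    simp only [Finset.mem_sigma, Finset.mem_Icc] at h ⊢
    omega
  · rintro ⟨p, q⟩ h ⟨p', q'⟩ h' he
    simp only [Finset.mem_sigma, Finset.mem_Icc] at h h'
    simp only [Sigma.mk.injEq, heq_eq_eq] at he ⊢
    omega
  · rintro ⟨k, s⟩ h
    simp only [Finset.mem_sigma, Finset.mem_Icc] at h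
    refine ⟨⟨s + 1 - i, k + 1 - i⟩, ?_, ?_⟩
    · simp only [Finset.mem_sigma, Finset.mem_Icc]; omega
    · simp only [Sigma.mk.injEq, heq_eq_eq]; omega
  · rintro ⟨p, q⟩ h
    simp only [Finset.mem_sigma, Finset.mem_Icc] at h
    simp only
    rw [key p q (by omega) (by omega) (by omega)]
    congr 1 <;> omega

lemma Phi_Icc (n : ℕ) (a : ℤ → ℤ → ℤ) (ha : IsLusztig n a) (i j : ℕ) (hi : 1 ≤ i) (hj : j ≤ n + 1) :
    Phi (n+1) a n 0 (Finset.Icc i j) - ∑ k ∈ Finset.Icc i j, wt a k =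
      - ∑ k ∈ Finset.Icc i j, ∑ s ∈ Finset.Icc 1 (i-1), a (s:ℤ) (k:ℤ) := by
  obtain ⟨c, hc, h⟩ := (Phi_isLeast n a ha (Finset.Icc i j) (Finset.Icc_subset_Icc hi hj)).1
  rw [h, tabSum_Icc a i j hi c hc, ← Finset.sum_sub_distrib, ← Finset.sum_neg_distrib]
  refine Finset.sum_congr rfl fun k hk => ?_
  rw [Finset.mem_Icc] at hk
  have : Finset.Icc 1 (k-1) = Finset.Icc 1 (i-1) ∪ Finset.Icc i (k-1) := by
    ext x; simp only [Finset.mem_union, Finset.mem_Icc]; omega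
  rw [wt, this, Finset.sum_union]
  · ring
  · rw [Finset.disjoint_left]; intro x; simp only [Finset.mem_Icc]; omega

lemma MK_eq (n : ℕ) (a : ℤ → ℤ → ℤ) (ha : IsLusztig n a) (K : Finset ℕ)
    (hK : K ⊆ Finset.Icc 1 (n+1)) :
    MK n a K = Phi (n+1) a n 0 K - ∑ k ∈ K, wt a k := by
  unfold MK
  split_ifs with h
  · rcases h with rfl | rfl
    · have := Phi_Icc n a ha 1 0 le_rfl (by omega)
      simp at this; simp [this]
    · rw [Phi_Icc n a ha 1 (n+1) le_rfl le_rfl]; simp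
  · rw [(Phi_isLeast n a ha K hK).csInf_eq]
    unfold wt; ring

lemma MK_Icc (n : ℕ) (a : ℤ → ℤ → ℤ) (ha : IsLusztig n a) (i j : ℕ) (hi : 1 ≤ i) (hj : j ≤ n + 1) :
    MK n a (Finset.Icc i j) = - ∑ k ∈ Finset.Icc i j, ∑ s ∈ Finset.Icc 1 (i-1), a (s:ℤ) (k:ℤ) := by
  rw [MK_eq n a ha _ (Finset.Icc_subset_Icc hi hj), Phi_Icc n a ha i j hi hj]

lemma MK_EBZ (n : ℕ) (a : ℤ → ℤ → ℤ) (ha : IsLusztig n a) : IsEBZ n (MK n a) := by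
  have g := gbz_tw (gbz_Phi (n+1) a n 0) (fun k => - wt a k)
  have e : ∀ K, K ⊆ Finset.Icc 1 (n+1) → MK n a K = (fun K => Phi (n+1) a n 0 K + ∑ k ∈ K, - wt a k) K := by
    intro K hK
    show _ = Phi (n+1) a n 0 K + ∑ k ∈ K, - wt a k
    rw [MK_eq n a ha K hK, Finset.sum_neg_distrib]; ring
  have ins : ∀ i K, 1 ≤ i → i ≤ n + 1 → K ⊆ Finset.Icc 1 (n+1) → insert i K ⊆ Finset.Icc 1 (n+1) := by
    intro i K h1 h2 h3
    exact Finset.insert_subset (Finset.mem_Icc.2 ⟨h1, h2⟩) h3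
  refine ⟨⟨by simp [MK], by simp [MK], ?_, ?_⟩, ?_⟩
  · intro i j K h1 h2 h3 h4 h5 h6 h7 h8
    have ki := ins i K h1 h2 h6
    have kj := ins j K h3 h4 h6
    rw [e _ ki, e _ kj, e _ h6, e _ (ins i _ h1 h2 kj)]
    exact g.1 i j K h5 h7 h8
  · intro i j k K h1 h2 h3 h4 h5 h6 h7 h8
    have ki := ins i K h1 (by omega) h5
    have kj := ins j K (by omega) (by omega) h5
    have kk := ins k K (by omega) (by omega) h5
    rw [e _ ki, e _ kj, e _ kk, e _ (ins i _ h1 (by omega) kj), e _ (ins i _ h1 (by omega) kk), e _ (ins j _ (by omega) (by omega) kk)]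
    exact g.2 i j k K h2 h3 h6 h7 h8
  · intro i h1 h2
    rw [MK_Icc n a ha 1 i le_rfl (by omega)]; simp

lemma MK_diff (n : ℕ) (a : ℤ → ℤ → ℤ) (ha : IsLusztig n a) (i j : ℕ) (hi : 1 ≤ i) (hij : i ≤ j)
    (hj : j + 1 ≤ n + 1) :
    a i ((j + 1 : ℕ) : ℤ) = MK n a (Finset.Icc i (j+1)) - MK n a (Finset.Icc i j)
      - MK n a (Finset.Icc (i+1) (j+1)) + MK n a (Finset.Icc (i+1) j) := by
  rw [MK_Icc n a ha _ _ (by omega) (by omega), MK_Icc n a ha _ _ (by omega) (by omega),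
    MK_Icc n a ha _ _ (by omega) (by omega), MK_Icc n a ha _ _ (by omega) (by omega),
    Finset.sum_Icc_succ_top (by omega), Finset.sum_Icc_succ_top (by omega)]
  obtain ⟨m, rfl⟩ : ∃ m, i = m + 1 := ⟨i - 1, by omega⟩
  have : ∑ s ∈ Finset.Icc 1 (m + 1 + 1 - 1), a (s:ℤ) ((j+1 : ℕ) : ℤ) =
     ∑ s ∈ Finset.Icc 1 (m + 1 - 1), a (s:ℤ) ((j+1 : ℕ) : ℤ) + a ((m+1 : ℕ) : ℤ) ((j+1 : ℕ) : ℤ) := by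
    rw [Nat.add_sub_cancel, Nat.add_sub_cancel, Finset.sum_Icc_succ_top (by omega)]
  rw [this]; ring

lemma BZ_unique (n : ℕ) (M M' : Finset ℕ → ℤ) (h : IsBZ n M) (h' : IsBZ n M')
    (hI : ∀ i j, 1 ≤ i → j ≤ n + 1 → M (Finset.Icc i j) = M' (Finset.Icc i j)) :
    ∀ (d : ℕ) (K : Finset ℕ), (∃ u, 1 ≤ u ∧ u + d ≤ n + 1 ∧ K ⊆ Finset.Icc u (u + d)) → M K = M' K := by
  intro d
  induction d with
  | zero =>
    rintro K ⟨u, h1, h2, h3⟩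
    rw [add_zero, Finset.Icc_self, Finset.subset_singleton_iff] at h3
    rcases h3 with rfl | rfl
    · rw [h.1, h'.1]
    · rw [← Finset.Icc_self]; exact hI u u h1 (by omega)
  | succ d ih =>
    rintro K ⟨u, h1, h2, h3⟩
    have hm : ∀ x ∈ K, u ≤ x ∧ x ≤ u + (d+1) := fun x hx => Finset.mem_Icc.1 (h3 hx)
    by_cases c1 : u ∈ K
    swap
    · refine ih K ⟨u+1, by omega, by omega, fun x hx => ?_⟩
      have := hm x hx
      have : x ≠ u := fun e => c1 (e ▸ hx)
      rw [Finset.mem_Icc]; omega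
    by_cases c2 : u + (d+1) ∈ K
    swap
    · refine ih K ⟨u, by omega, by omega, fun x hx => ?_⟩
      have := hm x hx
      have : x ≠ u + (d+1) := fun e => c2 (e ▸ hx)
      rw [Finset.mem_Icc]; omega
    by_cases c3 : Finset.Icc u (u + (d+1)) ⊆ K
    · rw [Finset.Subset.antisymm h3 c3]; exact hI _ _ h1 h2
    obtain ⟨j, hj, hjK⟩ := Finset.not_subset.1 c3
    rw [Finset.mem_Icc] at hj
    have j1 : j ≠ u := fun e => hjK (e ▸ c1)
    have j2 : j ≠ u + (d+1) := fun e => hjK (e ▸ c2)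
    obtain ⟨v, hv⟩ : ∃ v, v = u + (d+1) := ⟨_, rfl⟩
    rw [← hv] at c2 j2 hj hm
    obtain ⟨L, hL⟩ : ∃ L, L = (K.erase u).erase v := ⟨_, rfl⟩
    have hK : insert u (insert v L) = K := by
      rw [hL, Finset.insert_erase, Finset.insert_erase c1]
      rw [Finset.mem_erase]; exact ⟨by omega, c2⟩
    have m1 : ∀ x ∈ L, u < x ∧ x < v := by
      intro x hx
      rw [hL, Finset.mem_erase, Finset.mem_erase] at hx
      have := hm x hx.2.2
      omega
    have uL : u ∉ L := fun hx => by have := m1 _ hx; omega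
    have vL : v ∉ L := fun hx => by have := m1 _ hx; omega
    have jL : j ∉ L := fun hx => by
      rw [hL, Finset.mem_erase, Finset.mem_erase] at hx; exact hjK hx.2.2
    have LL : L ⊆ Finset.Icc 1 (n+1) := fun x hx => by
      have := m1 x hx; rw [Finset.mem_Icc]; omega
    have t := h.2.2.2 u j v L h1 (by omega) (by omega) (by omega) LL uL jL vL
    have t' := h'.2.2.2 u j v L h1 (by omega) (by omega) (by omega) LL uL jL vL
    have low : ∀ K', (∀ x ∈ K', u ≤ x ∧ x < v) → M K' = M' K' := fun K' hK' =>
      ih K' ⟨u, by omega, by omega, fun x hx => by have := hK' x hx; rw [Finset.mem_Icc]; omega⟩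
    have high : ∀ K', (∀ x ∈ K', u < x ∧ x ≤ v) → M K' = M' K' := fun K' hK' =>
      ih K' ⟨u+1, by omega, by omega, fun x hx => by have := hK' x hx; rw [Finset.mem_Icc]; omega⟩
    have q1 := low (insert j L) (by intro x hx; rw [Finset.mem_insert] at hx; have := m1 x; grind)
    have q2 := low (insert u (insert j L)) (by intro x hx; rw [Finset.mem_insert, Finset.mem_insert] at hx; have := m1 x; grind)
    have q3 := low (insert u L) (by intro x hx; rw [Finset.mem_insert] at hx; have := m1 x; grind)
    have q4 := high (insert v L) (by intro x hx; rw [Finset.mem_insert] at hx; have := m1 x; grind)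
    have q5 := high (insert j (insert v L)) (by intro x hx; rw [Finset.mem_insert, Finset.mem_insert] at hx; have := m1 x; grind)
    rw [hK] at t t'
    rw [q1, q2, q3, q4, q5] at t
    omega

lemma EBZ_surj (n : ℕ) (M : Finset ℕ → ℤ) (hM : IsEBZ n M) :
    ∃ a : ℤ → ℤ → ℤ, IsLusztig n a ∧
        ∀ K : Finset ℕ, K ⊆ Finset.Icc 1 (n + 1) → MK n a K = M K := by
  obtain ⟨D, hD⟩ : ∃ D : ℕ → ℕ → ℤ, D = fun i j => M (Finset.Icc i j) - M (Finset.Icc i (j-1))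
      - M (Finset.Icc (i+1) j) + M (Finset.Icc (i+1) (j-1)) := ⟨_, rfl⟩
  obtain ⟨a, hA⟩ : ∃ a : ℤ → ℤ → ℤ, a = fun k l => if 1 ≤ k ∧ k < l ∧ l ≤ (n : ℤ) + 1 then D k.toNat l.toNat else 0 :=
    ⟨_, rfl⟩
  have ha : IsLusztig n a := by
    constructor
    · intro k l
      rw [hA]; simp only
      split_ifs with h
      · obtain ⟨h1, h2, h3⟩ := h
        obtain ⟨i, rfl⟩ : ∃ i : ℕ, k = i := ⟨k.toNat, by omega⟩
        obtain ⟨j, rfl⟩ : ∃ j : ℕ, l = j := ⟨l.toNat, by omega⟩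
        rw [Int.toNat_natCast, Int.toNat_natCast, hD]
        simp only
        have b := hM.1.2.2.1 i j (Finset.Icc (i+1) (j-1)) (by omega) (by omega) (by omega) (by omega) (by omega)
          (Finset.Icc_subset_Icc (by omega) (by omega)) (by simp) (by rw [Finset.mem_Icc]; omega)
        have s1 : insert i (Finset.Icc (i+1) (j-1)) = Finset.Icc i (j-1) := by
          ext x; simp only [Finset.mem_insert, Finset.mem_Icc]; omega
        have s2 : insert j (Finset.Icc (i+1) (j-1)) = Finset.Icc (i+1) j := by
          ext x; simp only [Finset.mem_insert, Finset.mem_Icc]; omega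
        have s3 : insert i (Finset.Icc (i+1) j) = Finset.Icc i j := by
          ext x; simp only [Finset.mem_insert, Finset.mem_Icc]; omega
        rw [s1, s2, s3] at b
        omega
      · exact le_rfl
    · intro k l h
      rw [hA]; simp only [if_neg h]
  have hB := MK_EBZ n a ha
  refine ⟨a, ha, ?_⟩
  have hrec : ∀ i j, 1 ≤ i → i ≤ j → j + 1 ≤ n + 1 →
      MK n a (Finset.Icc i (j+1)) - MK n a (Finset.Icc i j)
      - MK n a (Finset.Icc (i+1) (j+1)) + MK n a (Finset.Icc (i+1) j) =
      M (Finset.Icc i (j+1)) - M (Finset.Icc i j)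
      - M (Finset.Icc (i+1) (j+1)) + M (Finset.Icc (i+1) j) := by
    intro i j h1 h2 h3
    rw [← MK_diff n a ha i j h1 h2 h3, hA]
    simp only
    rw [if_pos (by omega), Int.toNat_natCast, Int.toNat_natCast, hD]
    simp only [Nat.add_sub_cancel]
  have agree : ∀ i, ∀ j, j ≤ n + 1 → MK n a (Finset.Icc (i+1) j) = M (Finset.Icc (i+1) j) := by
    have one : ∀ M' : Finset ℕ → ℤ, IsEBZ n M' → ∀ j, j ≤ n + 1 → M' (Finset.Icc 1 j) = 0 := by
      intro M' h j hj
      rcases Nat.eq_zero_or_pos j with rfl | h1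
      · simpa using h.1.1
      · rcases Nat.lt_or_ge n j with h2 | h2
        · have : j = n + 1 := by omega
          rw [this]; exact h.1.2.1
        · exact h.2 j h1 h2
    intro i
    induction i with
    | zero => intro j hj; rw [zero_add, one _ hB j hj, one _ hM j hj]
    | succ i ih =>
      intro j
      induction j with
      | zero => intro _; simp [hB.1.1, hM.1.1]
      | succ j ihj =>
        intro hj
        by_cases c : i + 1 ≤ j
        · have r := hrec (i+1) j (by omega) c hj
          have := ih (j+1) hj
          have := ih j (by omega)
          have := ihj (by omega)
          omega
        · have : Finset.Icc (i+1+1) (j+1) = ∅ := Finset.Icc_eq_empty (by omega)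
          rw [this, hB.1.1, hM.1.1]
  intro K hK
  refine BZ_unique n _ _ hB.1 hM.1 ?_ n K ⟨1, le_rfl, by omega, by rwa [add_comm 1 n]⟩
  intro i j hi hj
  obtain ⟨m, rfl⟩ : ∃ m, i = m + 1 := ⟨i - 1, by omega⟩
  exact agree m j hj


/-- the map `Ψ : ℬ → BZ^e`, `a ↦ (M_K(a))_{K ∈ M_n^×}`, is a bijection from
the set of Lusztig data onto the set of `e`-BZ data: it is well defined, injective, and
surjective (BZ data being collections indexed by Maya diagrams `K ⊆ [1,n+1]`). -/
theorem stmt10 (n : ℕ) (hn : 1 ≤ n) :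
    (∀ a : ℤ → ℤ → ℤ, IsLusztig n a → IsEBZ n (MK n a)) ∧
    (∀ a b : ℤ → ℤ → ℤ, IsLusztig n a → IsLusztig n b →
      (∀ K : Finset ℕ, K ⊆ Finset.Icc 1 (n + 1) → MK n a K = MK n b K) → a = b) ∧
    (∀ M : Finset ℕ → ℤ, IsEBZ n M →
      ∃ a : ℤ → ℤ → ℤ, IsLusztig n a ∧
        ∀ K : Finset ℕ, K ⊆ Finset.Icc 1 (n + 1) → MK n a K = M K) := by
  refine ⟨fun a ha => MK_EBZ n a ha, ?_, fun M hM => EBZ_surj n M hM⟩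
  intro a b ha hb h
  funext k l
  by_cases c : 1 ≤ k ∧ k < l ∧ l ≤ (n : ℤ) + 1
  · obtain ⟨h1, h2, h3⟩ := c
    obtain ⟨i, rfl⟩ : ∃ i : ℕ, k = i := ⟨k.toNat, by omega⟩
    obtain ⟨j, rfl⟩ : ∃ j : ℕ, l = (j + 1 : ℕ) := ⟨l.toNat - 1, by omega⟩
    rw [MK_diff n a ha i j (by omega) (by omega) (by omega),
      MK_diff n b hb i j (by omega) (by omega) (by omega)]
    rw [h, h, h, h]
    all_goals exact Finset.Icc_subset_Icc (by omega) (by omega)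
  · rw [ha.2 k l c, hb.2 k l c]
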